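/- Let Ω ⊊ ℝⁿ (n ≥ 2) be a domain that is starlike with respect to a point x ∈ Ω. Then for every r > 0 the quasihyperbolic ball B_k(x,r) is starlike with respect to x. -/

import Mathlib

open Set Metric MeasureTheory

noncomputable section

variable {E : Type*} [NormedAddCommGroup E] [NormedSpace ℝ E]

/-- The quasihyperbolic length of a path `γ` (parametrized on `[0,1]`) in the
domain `Ω`: the integral of `‖γ'(t)‖ / d(γ(t), ∂Ω)`. -/
def qhLength (Ω : Set E) (γ : ℝ → E) : ℝ :=
  ∫ t in (0:ℝ)..1, ‖deriv γ t‖ / infDist (γ t) (frontier Ω)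

/-- A rectifiable curve in `Ω` joining `x` and `y`, formalized as a map on `[0,1]`
which is Lipschitz on `[0,1]` (every rectifiable curve admits such a
parametrization), takes values in `Ω`, and joins `x` to `y`. -/
def IsRectPath (Ω : Set E) (x y : E) (γ : ℝ → E) : Prop :=
  (∃ K : NNReal, LipschitzOnWith K γ (Icc 0 1)) ∧
    MapsTo γ (Icc 0 1) Ω ∧ γ 0 = x ∧ γ 1 = y

/-- The quasihyperbolic metric on `Ω`. -/
def qhDist (Ω : Set E) (x y : E) : ℝ :=
  sInf (qhLength Ω '' {γ | IsRectPath Ω x y γ})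

/-- The quasihyperbolic ball. -/
def qhBall (Ω : Set E) (x : E) (r : ℝ) : Set E :=
  {y ∈ Ω | qhDist Ω x y < r}

/-- The distance ratio metric (`j`-metric) on `Ω`. -/
def jDist (Ω : Set E) (x y : E) : ℝ :=
  Real.log (1 + dist x y / min (infDist x (frontier Ω)) (infDist y (frontier Ω)))

/-- The `j`-metric ball. -/
def jBall (Ω : Set E) (x : E) (r : ℝ) : Set E :=
  {y ∈ Ω | jDist Ω x y < r}

/-- `G` is strictly starlike with respect to `x`: it is starlike with respect to `x`
and every half-line emanating from `x` meets `∂G` at exactly one point. -/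
def StrictlyStarlike (G : Set E) (x : E) : Prop :=
  StarConvex ℝ x G ∧
    ∀ v : E, v ≠ 0 → ∃! p : E, p ∈ frontier G ∧ ∃ t : ℝ, 0 < t ∧ p = x + t • v

/-- `G` is strictly convex: it is strictly starlike with respect to each of its points. -/
def StrictlyConvexSet (G : Set E) : Prop :=
  ∀ x ∈ G, StrictlyStarlike G x

/-- A half-line: `{t • v + z : t > 0}` or `{t • v + z : t ≥ 0}` with `v ≠ 0`. -/
def IsHalfline (L : Set E) : Prop :=
  ∃ z v : E, v ≠ 0 ∧
    (L = {p | ∃ t : ℝ, 0 < t ∧ p = t • v + z} ∨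
      L = {p | ∃ t : ℝ, 0 ≤ t ∧ p = t • v + z})

/-- `G` is close-to-convex: its complement can be covered with pairwise
non-intersecting half-lines. -/
def CloseToConvex (G : Set E) : Prop :=
  ∃ 𝒮 : Set (Set E), (∀ L ∈ 𝒮, IsHalfline L) ∧ 𝒮.PairwiseDisjoint id ∧ Gᶜ = ⋃₀ 𝒮

end

/-!
Let `h` be the homothety with centre `x` and ratio `b ∈ [0, 1]`. If the ball `B(z, ρ)` lies in `Ω`,
then so does its image `B(h z, bρ)`, because `Ω` is starlike with respect to `x`; taking
`ρ = d(z, ∂Ω)` gives `b d(z, ∂Ω) ≤ d(h z, ∂Ω)`. Since `h` also scales the speed of a path by `b`,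
it does not increase the quasihyperbolic length of any path. Hence `h` is `1`-Lipschitz on `(Ω, k)`
and fixes `x`, so it maps every quasihyperbolic ball centred at `x` into itself.
-/

open AffineMap

section Homothety

variable {𝕜 V P : Type*} [NormedField 𝕜] [SeminormedAddCommGroup V] [NormedSpace 𝕜 V]
  [PseudoMetricSpace P] [NormedAddTorsor V P]

theorem dist_homothety_homothety (x : P) (b : 𝕜) (y z : P) :
    dist (homothety x b y) (homothety x b z) = ‖b‖ * dist y z := by
  simp only [homothety_apply, dist_vadd_cancel_right, dist_smul₀, dist_vsub_cancel_right]

theorem lipschitzWith_homothety (x : P) (b : 𝕜) : LipschitzWith ‖b‖₊ (homothety x b) :=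
  LipschitzWith.of_dist_le_mul fun y z => (dist_homothety_homothety x b y z).le

theorem ball_subset_image_homothety_ball (x z : P) (b : 𝕜) (ρ : ℝ) :
    ball (homothety x b z) (‖b‖ * ρ) ⊆ homothety x b '' ball z ρ := by
  obtain rfl | hb := eq_or_ne b 0
  · simp
  intro w hw
  have hw_eq : homothety x b (homothety x b⁻¹ w) = w := by
    rw [← homothety_mul_apply, mul_inv_cancel₀ hb, homothety_one, id_apply]
  refine ⟨homothety x b⁻¹ w, ?_, hw_eq⟩
  rw [← hw_eq, mem_ball, dist_homothety_homothety] at hw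
  exact lt_of_mul_lt_mul_left hw (norm_nonneg b)

end Homothety

theorem starConvex_iff_mapsTo_homothety {𝕜 E : Type*} [CommRing 𝕜] [PartialOrder 𝕜]
    [AddRightMono 𝕜] [AddCommGroup E] [Module 𝕜 E] {x : E} {s : Set E} :
    StarConvex 𝕜 x s ↔ ∀ b ∈ Icc (0 : 𝕜) 1, MapsTo (homothety x b) s s := by
  simp only [starConvex_iff_segment_subset, segment_eq_image_lineMap, image_subset_iff,
    homothety_eq_lineMap, MapsTo]
  exact ⟨fun h b hb y hy => h hy hb, fun h y hy b hb => h b hb hy⟩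

theorem deriv_homothety_comp {𝕜 E : Type*} [NontriviallyNormedField 𝕜] [NormedAddCommGroup E]
    [NormedSpace 𝕜 E] (x : E) (b : 𝕜) (γ : 𝕜 → E) (t : 𝕜) :
    deriv (homothety x b ∘ γ) t = b • deriv γ t := by
  simp only [Function.comp_def, homothety_apply, vsub_eq_sub, vadd_eq_add, deriv_add_const,
    deriv_fun_const_smul_field, deriv_sub_const]

theorem intervalIntegrable_deriv_of_lipschitzOn {E : Type*} [NormedAddCommGroup E]
    [NormedSpace ℝ E] [CompleteSpace E] {K : NNReal} {γ : ℝ → E} {a b : ℝ} (hab : a ≤ b)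
    (hγ : LipschitzOnWith K γ (Icc a b)) : IntervalIntegrable (deriv γ) volume a b := by
  rw [intervalIntegrable_iff_integrableOn_Ioo_of_le hab]
  refine Measure.integrableOn_of_bounded (M := K) measure_Ioo_lt_top.ne
    (stronglyMeasurable_deriv γ).aestronglyMeasurable ?_
  exact ae_restrict_of_forall_mem measurableSet_Ioo fun t ht =>
    norm_deriv_le_of_lipschitzOn (Icc_mem_nhds ht.1 ht.2) hγ

section Frontier

theorem subset_of_isPreconnected_of_disjoint_frontier {X : Type*} [TopologicalSpace X]
    {s t : Set X} (hs : IsPreconnected s) (hst : Disjoint s (frontier t)) (hne : (s ∩ t).Nonempty) :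
    s ⊆ t := by
  have hcover : s ⊆ interior t ∪ interior tᶜ := fun w hw => by
    rw [← compl_frontier_eq_union_interior]
    exact disjoint_left.1 hst hw
  obtain ⟨z, hzs, hzt⟩ := hne
  have hz : z ∈ interior t :=
    (hcover hzs).resolve_right fun hz => interior_subset hz hzt
  exact (hs.subset_left_of_subset_union isOpen_interior isOpen_interior
    (disjoint_compl_right.mono interior_subset interior_subset) hcover ⟨z, hzs, hz⟩).trans
    interior_subset

theorem le_infDist_frontier_of_ball_subset {X : Type*} [PseudoMetricSpace X] {s : Set X} {z : X}
    {ρ : ℝ} (hne : (frontier s).Nonempty) (hball : ball z ρ ⊆ s) : ρ ≤ infDist z (frontier s) := by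
  refine (le_infDist hne).2 fun p hp => ?_
  by_contra! hlt
  exact hp.2 (interior_maximal hball isOpen_ball (mem_ball'.2 hlt))

variable {E : Type*} [NormedAddCommGroup E] [NormedSpace ℝ E] {Ω : Set E}

theorem ball_infDist_frontier_subset {z : E} (hz : z ∈ Ω) :
    ball z (infDist z (frontier Ω)) ⊆ Ω := by
  obtain hρ | hρ := le_or_gt (infDist z (frontier Ω)) 0
  · rw [ball_eq_empty.2 hρ]
    exact empty_subset Ω
  · exact subset_of_isPreconnected_of_disjoint_frontier (convex_ball z _).isPreconnected
      disjoint_ball_infDist ⟨z, mem_ball_self hρ, hz⟩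

theorem infDist_frontier_pos (hΩ : IsOpen Ω) (hproper : Ω ≠ univ) {z : E} (hz : z ∈ Ω) :
    0 < infDist z (frontier Ω) :=
  (isClosed_frontier.notMem_iff_infDist_pos (nonempty_frontier_iff.2 ⟨⟨z, hz⟩, hproper⟩)).1 <|
    disjoint_right.1 (disjoint_frontier_iff_isOpen.2 hΩ) hz

theorem mul_infDist_frontier_le_infDist_frontier_homothety {x z : E} (hstar : StarConvex ℝ x Ω)
    {b : ℝ} (hb : b ∈ Icc (0 : ℝ) 1) (hz : z ∈ Ω) :
    b * infDist z (frontier Ω) ≤ infDist (homothety x b z) (frontier Ω) := by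
  obtain hempty | hne := (frontier Ω).eq_empty_or_nonempty
  · simp [hempty]
  refine le_infDist_frontier_of_ball_subset hne ?_
  calc ball (homothety x b z) (b * infDist z (frontier Ω))
      = ball (homothety x b z) (‖b‖ * infDist z (frontier Ω)) := by rw [Real.norm_of_nonneg hb.1]
    _ ⊆ homothety x b '' ball z (infDist z (frontier Ω)) :=
        ball_subset_image_homothety_ball x z b _
    _ ⊆ homothety x b '' Ω := image_mono (ball_infDist_frontier_subset hz)
    _ ⊆ Ω := (starConvex_iff_mapsTo_homothety.1 hstar b hb).image_subset

end Frontier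

section QuasihyperbolicMetric

variable {E : Type*} [NormedAddCommGroup E] [NormedSpace ℝ E] {Ω : Set E} {x y z : E} {γ : ℝ → E}

theorem isRectPath_lineMap (h : segment ℝ y z ⊆ Ω) : IsRectPath Ω y z (lineMap y z) := by
  rw [segment_eq_image_lineMap, ← mapsTo_iff_image_subset] at h
  exact ⟨⟨_, (lipschitzWith_lineMap y z).lipschitzOnWith⟩, h, lineMap_apply_zero y z,
    lineMap_apply_one y z⟩

theorem IsRectPath.homothety_comp (hγ : IsRectPath Ω y z γ) (hstar : StarConvex ℝ x Ω) {b : ℝ}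
    (hb : b ∈ Icc (0 : ℝ) 1) :
    IsRectPath Ω (homothety x b y) (homothety x b z) (homothety x b ∘ γ) := by
  obtain ⟨⟨K, hK⟩, hmaps, rfl, rfl⟩ := hγ
  exact ⟨⟨_, (lipschitzWith_homothety x b).comp_lipschitzOnWith hK⟩,
    (starConvex_iff_mapsTo_homothety.1 hstar b hb).comp hmaps, rfl, rfl⟩

theorem IsRectPath.intervalIntegrable_qhLength_integrand [CompleteSpace E] (hγ : IsRectPath Ω y z γ)
    (hΩ : IsOpen Ω) (hproper : Ω ≠ univ) :
    IntervalIntegrable (fun t => ‖deriv γ t‖ / infDist (γ t) (frontier Ω)) volume 0 1 := by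
  obtain ⟨⟨K, hK⟩, hmaps, -, -⟩ := hγ
  have hinv : ContinuousOn (fun t => (infDist (γ t) (frontier Ω))⁻¹) (Icc 0 1) :=
    ((continuous_infDist_pt _).comp_continuousOn hK.continuousOn).inv₀ fun t ht =>
      (infDist_frontier_pos hΩ hproper (hmaps ht)).ne'
  rw [← uIcc_of_le zero_le_one] at hinv
  simpa only [div_eq_mul_inv] using
    (intervalIntegrable_deriv_of_lipschitzOn zero_le_one hK).norm.mul_continuousOn hinv

theorem qhLength_integrand_homothety_comp_le (hΩ : IsOpen Ω) (hproper : Ω ≠ univ)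
    (hstar : StarConvex ℝ x Ω) {b : ℝ} (hb : b ∈ Icc (0 : ℝ) 1) {t : ℝ} (ht : γ t ∈ Ω) :
    ‖deriv (homothety x b ∘ γ) t‖ / infDist (homothety x b (γ t)) (frontier Ω) ≤
      ‖deriv γ t‖ / infDist (γ t) (frontier Ω) := by
  have hpos : 0 < infDist (γ t) (frontier Ω) := infDist_frontier_pos hΩ hproper ht
  have hpos' : 0 < infDist (homothety x b (γ t)) (frontier Ω) :=
    infDist_frontier_pos hΩ hproper (starConvex_iff_mapsTo_homothety.1 hstar b hb ht)
  rw [div_le_div_iff₀ hpos' hpos]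
  calc ‖deriv (homothety x b ∘ γ) t‖ * infDist (γ t) (frontier Ω)
      = ‖deriv γ t‖ * (b * infDist (γ t) (frontier Ω)) := by
        rw [deriv_homothety_comp, norm_smul, Real.norm_of_nonneg hb.1]
        ring
    _ ≤ ‖deriv γ t‖ * infDist (homothety x b (γ t)) (frontier Ω) := by
        gcongr
        exact mul_infDist_frontier_le_infDist_frontier_homothety hstar hb ht

theorem qhLength_nonneg (Ω : Set E) (γ : ℝ → E) : 0 ≤ qhLength Ω γ :=
  intervalIntegral.integral_nonneg zero_le_one fun _ _ =>
    div_nonneg (norm_nonneg _) infDist_nonneg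

theorem IsRectPath.qhDist_le_qhLength (hγ : IsRectPath Ω y z γ) : qhDist Ω y z ≤ qhLength Ω γ :=
  csInf_le ⟨0, forall_mem_image.2 fun δ _ => qhLength_nonneg Ω δ⟩ (mem_image_of_mem _ hγ)

theorem IsRectPath.qhLength_homothety_comp_le [CompleteSpace E] (hγ : IsRectPath Ω y z γ)
    (hΩ : IsOpen Ω) (hproper : Ω ≠ univ) (hstar : StarConvex ℝ x Ω) {b : ℝ}
    (hb : b ∈ Icc (0 : ℝ) 1) : qhLength Ω (homothety x b ∘ γ) ≤ qhLength Ω γ :=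
  intervalIntegral.integral_mono_on_of_le_Ioo zero_le_one
    ((hγ.homothety_comp hstar hb).intervalIntegrable_qhLength_integrand hΩ hproper)
    (hγ.intervalIntegrable_qhLength_integrand hΩ hproper) fun _ ht =>
      qhLength_integrand_homothety_comp_le hΩ hproper hstar hb (hγ.2.1 (Ioo_subset_Icc_self ht))

-- Pitfall: `qhDist Ω y z = 0` when no rectifiable path in `Ω` joins `y` to `z`.
theorem qhDist_homothety_le [CompleteSpace E] (hΩ : IsOpen Ω) (hproper : Ω ≠ univ)
    (hstar : StarConvex ℝ x Ω) {b : ℝ} (hb : b ∈ Icc (0 : ℝ) 1)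
    (hyz : ∃ γ, IsRectPath Ω y z γ) :
    qhDist Ω (homothety x b y) (homothety x b z) ≤ qhDist Ω y z := by
  refine le_csInf (Set.Nonempty.image _ hyz) (forall_mem_image.2 fun γ hγ => ?_)
  exact (hγ.homothety_comp hstar hb).qhDist_le_qhLength.trans
    (hγ.qhLength_homothety_comp_le hΩ hproper hstar hb)

theorem qh_ball_starlike_of_starlike_general [CompleteSpace E] (hΩ : IsOpen Ω)
    (hproper : Ω ≠ univ) (hstar : StarConvex ℝ x Ω) (r : ℝ) :
    StarConvex ℝ x (qhBall Ω x r) := by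
  refine starConvex_iff_mapsTo_homothety.2 fun b hb y ⟨hy, hyr⟩ =>
    ⟨starConvex_iff_mapsTo_homothety.1 hstar b hb hy, ?_⟩
  have hpath : ∃ γ, IsRectPath Ω x y γ := ⟨_, isRectPath_lineMap (hstar.segment_subset hy)⟩
  calc qhDist Ω x (homothety x b y)
      = qhDist Ω (homothety x b x) (homothety x b y) := by rw [homothety_apply_same]
    _ ≤ qhDist Ω x y := qhDist_homothety_le hΩ hproper hstar hb hpath
    _ < r := hyr

end QuasihyperbolicMetric

/-- if `Ω` is starlike with respect to `x`, then every quasihyperbolic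
ball centered at `x` is starlike with respect to `x`. -/
theorem qh_ball_starlike_of_starlike (n : ℕ) (hn : 2 ≤ n)
    (Ω : Set (EuclideanSpace ℝ (Fin n)))
    (hopen : IsOpen Ω) (hconn : IsConnected Ω) (hproper : Ω ≠ univ)
    (x : EuclideanSpace ℝ (Fin n)) (hx : x ∈ Ω) (hstar : StarConvex ℝ x Ω)
    (r : ℝ) (hr : 0 < r) :
    StarConvex ℝ x (qhBall Ω x r) :=
  qh_ball_starlike_of_starlike_general hopen hproper hstar r
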